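/- arXiv:2602.02147 — 2 statements merged into one kernel-verified Lean document; each statement's English description precedes it below -/
import Mathlib

section
/- Let H be a real inner product space, let μ ∈ (0,1) and α > 0 be real, and let θ, θ*, g_CL, g_HPE ∈ H satisfy ‖θ − θ*‖ ≤ D, ‖g_CL‖ ≤ G_benign, and ‖g_HPE‖ ≤ G_attack for constants D, G_benign, G_attack > 0. Define the updated point θ' = θ − α · ((1−μ)·g_CL + μ·g_HPE). Then ⟨g_CL, θ − θ*⟩ ≤ (‖θ − θ*‖² − ‖θ' − θ*‖²) / (2α(1−μ)) + μ·D·G_attack / (1−μ) + α·(G_benign + G_attack)² / (2(1−μ)). -/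
/-!
With `d = θ - θ*` and `v = (1-μ) g_CL + μ g_HPE`, expanding `‖d - α v‖²` expresses `2α⟪v, d⟫` as
`‖d‖² - ‖θ' - θ*‖² + α²‖v‖²`. Splitting `⟪v, d⟫` isolates `(1-μ)⟪g_CL, d⟫`; the `g_HPE` part is
bounded by Cauchy–Schwarz, `‖v‖` by the triangle inequality (with both weights at most `1`), and
dividing by `2α(1-μ) > 0` gives the claim.
-/

open RealInnerProductSpace

/-- Per-step inequality (Eq. (16)) for one step of gradient descent on the mixed loss
whose gradient is `(1-μ)·g_CL + μ·g_HPE`. -/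
theorem hpe_per_step_inequality
    {H : Type*} [NormedAddCommGroup H] [InnerProductSpace ℝ H]
    (μ α D Gbenign Gattack : ℝ)
    (hμ : μ ∈ Set.Ioo (0 : ℝ) 1) (hα : 0 < α)
    (hD : 0 < D) (hGb : 0 < Gbenign) (hGa : 0 < Gattack)
    (θ θstar gCL gHPE : H)
    (hdist : ‖θ - θstar‖ ≤ D)
    (hgCL : ‖gCL‖ ≤ Gbenign) (hgHPE : ‖gHPE‖ ≤ Gattack)
    (θ' : H) (hθ' : θ' = θ - α • ((1 - μ) • gCL + μ • gHPE)) :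
    ⟪gCL, θ - θstar⟫ ≤
      (‖θ - θstar‖ ^ 2 - ‖θ' - θstar‖ ^ 2) / (2 * α * (1 - μ))
        + μ * D * Gattack / (1 - μ)
        + α * (Gbenign + Gattack) ^ 2 / (2 * (1 - μ)) := by
  obtain ⟨h0, h1⟩ := hμ
  have hμ1 : 0 < 1 - μ := by linarith
  set d := θ - θstar with hd
  set v := (1 - μ) • gCL + μ • gHPE with hv
  have hexp : ‖θ' - θstar‖ ^ 2 = ‖d‖ ^ 2 - 2 * α * ⟪v, d⟫ + α ^ 2 * ‖v‖ ^ 2 := by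
    have : θ' - θstar = d - α • v := by rw [hθ', hd]; abel
    rw [this, norm_sub_sq_real, inner_smul_right, norm_smul, Real.norm_eq_abs, mul_pow, sq_abs,
      real_inner_comm]
    ring
  have hvd : ⟪v, d⟫ = (1 - μ) * ⟪gCL, d⟫ + μ * ⟪gHPE, d⟫ := by
    rw [hv, inner_add_left, real_inner_smul_left, real_inner_smul_left]
  have hcs : -⟪gHPE, d⟫ ≤ D * Gattack := by
    calc -⟪gHPE, d⟫ ≤ |⟪gHPE, d⟫| := neg_le_abs _
      _ ≤ ‖gHPE‖ * ‖d‖ := abs_real_inner_le_norm _ _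
      _ ≤ Gattack * D := by gcongr
      _ = D * Gattack := mul_comm _ _
  have hvn : ‖v‖ ≤ Gbenign + Gattack := by
    calc ‖v‖ ≤ ‖(1 - μ) • gCL‖ + ‖μ • gHPE‖ := norm_add_le _ _
      _ = (1 - μ) * ‖gCL‖ + μ * ‖gHPE‖ := by
        rw [norm_smul_of_nonneg hμ1.le, norm_smul_of_nonneg h0.le]
      _ ≤ 1 * Gbenign + 1 * Gattack := by gcongr; linarith
      _ = Gbenign + Gattack := by ring
  have hvsq : α ^ 2 * ‖v‖ ^ 2 ≤ α ^ 2 * (Gbenign + Gattack) ^ 2 := by gcongr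
  have hcs' : 2 * α * μ * -⟪gHPE, d⟫ ≤ 2 * α * μ * (D * Gattack) := by gcongr
  have hrhs : (‖d‖ ^ 2 - ‖θ' - θstar‖ ^ 2) / (2 * α * (1 - μ)) + μ * D * Gattack / (1 - μ)
      + α * (Gbenign + Gattack) ^ 2 / (2 * (1 - μ))
      = (‖d‖ ^ 2 - ‖θ' - θstar‖ ^ 2 + 2 * α * μ * (D * Gattack)
        + α ^ 2 * (Gbenign + Gattack) ^ 2) / (2 * α * (1 - μ)) := by
    field_simp
  rw [hrhs, le_div_iff₀ (by positivity), hexp, hvd]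
  linarith
end

section
/- Let H be a real inner product space. Suppose L_CL : H → ℝ and L_HPE : H → ℝ are differentiable, L_CL is convex (i.e., L_CL(θ₂) ≥ L_CL(θ₁) + ⟨∇L_CL(θ₁), θ₂ − θ₁⟩ for all θ₁, θ₂ ∈ H), ‖∇L_CL(θ)‖ ≤ G_benign and ‖∇L_HPE(θ)‖ ≤ G_attack for all θ ∈ H, with G_benign, G_attack > 0. Fix μ ∈ (0,1), C > 0, p ∈ (0,1), and set α_t = C / t^p. Let (θ^t)_{t≥1} evolve by θ^{t+1} = θ^t − α_t · ((1−μ)∇L_CL(θ^t) + μ∇L_HPE(θ^t)), and let θ* ∈ H satisfy ‖θ^t − θ*‖ ≤ D for all t ≥ 1 with D > 0. Then for every integer T ≥ 1, Σ_{t=1}^{T} (L_CL(θ^t) − L_CL(θ*)) ≤ D²·T^p / (2C(1−μ)) + μ·D·G_attack·T / (1−μ) + C·(G_benign + G_attack)²·T^{1−p} / (2(1−μ)(1−p)). -/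
/-!
Expanding `‖θ^{t+1} - θ*‖²` and using the gradient bounds gives, with `G = G_benign + G_attack`,
`(1-μ)(L_CL(θ^t) - L_CL(θ*)) + ‖θ^{t+1}-θ*‖²/(2α_t) ≤ ‖θ^t-θ*‖²/(2α_t) + μ D G_attack + α_t G²/2`
(`one_step_bound`). Summing by induction on `T`, the distance terms telescope up to the
increments `(T+1)^p - T^p` times `D²/(2C)`, provided the term `T^p ‖θ^{T+1}-θ*‖²/(2C)` is kept on
the left-hand side. The sum of `t^{-p}` is controlled one term at a time by
`(1-p)/(n+1)^p ≤ (n+1)^{1-p} - n^{1-p}` (`one_sub_div_rpow_le`).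
-/

open RealInnerProductSpace

/-- Each term of `∑ t^{-p}` is bounded by an increment of `t^{1-p}/(1-p)`; this is the weighted
AM-GM inequality `n^{1-p} (n+1)^p ≤ (1-p) n + p (n+1)`. -/
lemma one_sub_div_rpow_le (p : ℝ) (hp0 : 0 < p) (hp1 : p < 1) (n : ℕ) :
    (1 - p) / ((n : ℝ) + 1) ^ p ≤ ((n : ℝ) + 1) ^ (1 - p) - (n : ℝ) ^ (1 - p) := by
  have hn : (0 : ℝ) ≤ n := n.cast_nonneg
  have hn1 : (0 : ℝ) < (n : ℝ) + 1 := by linarith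
  have hx : 0 < ((n : ℝ) + 1) ^ p := Real.rpow_pos_of_pos hn1 p
  have hxy : ((n : ℝ) + 1) ^ (1 - p) * ((n : ℝ) + 1) ^ p = n + 1 := by
    rw [← Real.rpow_add hn1]; simp
  have hamgm := Real.geom_mean_le_arith_mean2_weighted (by linarith : 0 ≤ 1 - p) hp0.le hn hn1.le
    (by ring)
  rw [div_le_iff₀ hx, sub_mul, hxy]
  linarith

/-- One gradient step along `(1-μ) u + μ v` with step size `a`, where `w` is the displacement from
the comparison point and `u`, `v` are the benign and attack gradients. -/
lemma one_step_bound {H : Type*} [NormedAddCommGroup H] [InnerProductSpace ℝ H]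
    (u v w : H) (a μ B A D : ℝ) (ha : 0 < a) (hμ0 : 0 < μ) (hμ1 : μ < 1)
    (hu : ‖u‖ ≤ B) (hv : ‖v‖ ≤ A) (hw : ‖w‖ ≤ D) :
    (1 - μ) * ⟪u, w⟫ + ‖w - a • ((1 - μ) • u + μ • v)‖ ^ 2 / (2 * a)
      ≤ ‖w‖ ^ 2 / (2 * a) + μ * D * A + a * (B + A) ^ 2 / 2 := by
  have hB : 0 ≤ B := (norm_nonneg u).trans hu
  have hA : 0 ≤ A := (norm_nonneg v).trans hv
  have hg : ‖(1 - μ) • u + μ • v‖ ≤ B + A := by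
    refine (norm_add_le _ _).trans ?_
    rw [norm_smul, norm_smul, Real.norm_of_nonneg hμ0.le, Real.norm_of_nonneg (by linarith)]
    have h1 := mul_le_mul_of_nonneg_left hu (by linarith : 0 ≤ 1 - μ)
    have h2 := mul_le_mul_of_nonneg_left hv hμ0.le
    nlinarith
  have hg2 : ‖(1 - μ) • u + μ • v‖ ^ 2 ≤ (B + A) ^ 2 :=
    pow_le_pow_left₀ (norm_nonneg _) hg 2
  have hvw : -⟪v, w⟫ ≤ A * D :=
    (neg_le_abs _).trans ((abs_real_inner_le_norm v w).trans
      (mul_le_mul hv hw (norm_nonneg _) hA))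
  have hinner : ⟪w, (1 - μ) • u + μ • v⟫ = (1 - μ) * ⟪u, w⟫ + μ * ⟪v, w⟫ := by
    rw [inner_add_right, real_inner_smul_right, real_inner_smul_right, real_inner_comm w u,
      real_inner_comm w v]
  have hexp : ‖w - a • ((1 - μ) • u + μ • v)‖ ^ 2 / (2 * a)
      = ‖w‖ ^ 2 / (2 * a) - ((1 - μ) * ⟪u, w⟫ + μ * ⟪v, w⟫)
        + a * ‖(1 - μ) • u + μ • v‖ ^ 2 / 2 := by
    rw [norm_sub_sq_real, real_inner_smul_right, hinner, norm_smul, Real.norm_of_nonneg ha.le]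
    field_simp
  rw [hexp]
  have h1 := mul_le_mul_of_nonneg_left hg2 ha.le
  have h2 := mul_le_mul_of_nonneg_left hvw hμ0.le
  linarith

/-- Combined finite-horizon regret bound on the benign contrastive loss `L_CL` under
the HPE attack's gradient descent on the mixed loss with step size `α_t = C / t^p`. -/
theorem hpe_finite_regret_bound
    {H : Type*} [NormedAddCommGroup H] [InnerProductSpace ℝ H] [CompleteSpace H]
    (LCL LHPE : H → ℝ)
    (hdiffCL : ∀ θ : H, DifferentiableAt ℝ LCL θ)
    (hdiffHPE : ∀ θ : H, DifferentiableAt ℝ LHPE θ)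
    (hconv : ∀ θ₁ θ₂ : H, LCL θ₂ ≥ LCL θ₁ + ⟪gradient LCL θ₁, θ₂ - θ₁⟫)
    (Gbenign Gattack : ℝ) (hGb : 0 < Gbenign) (hGa : 0 < Gattack)
    (hgradCL : ∀ θ : H, ‖gradient LCL θ‖ ≤ Gbenign)
    (hgradHPE : ∀ θ : H, ‖gradient LHPE θ‖ ≤ Gattack)
    (μ : ℝ) (hμ : μ ∈ Set.Ioo (0 : ℝ) 1)
    (C : ℝ) (hC : 0 < C) (p : ℝ) (hp : p ∈ Set.Ioo (0 : ℝ) 1)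
    (α : ℕ → ℝ) (hα : ∀ t : ℕ, 1 ≤ t → α t = C / (t : ℝ) ^ p)
    (θseq : ℕ → H)
    (hupdate : ∀ t : ℕ, 1 ≤ t →
      θseq (t + 1) = θseq t
        - α t • ((1 - μ) • gradient LCL (θseq t) + μ • gradient LHPE (θseq t)))
    (θstar : H)
    (D : ℝ) (hD : 0 < D) (hdist : ∀ t : ℕ, 1 ≤ t → ‖θseq t - θstar‖ ≤ D)
    (T : ℕ) (hT : 1 ≤ T) :
    ∑ t ∈ Finset.Icc 1 T, (LCL (θseq t) - LCL θstar)
      ≤ D ^ 2 * (T : ℝ) ^ p / (2 * C * (1 - μ))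
        + μ * D * Gattack * T / (1 - μ)
        + C * (Gbenign + Gattack) ^ 2 * (T : ℝ) ^ (1 - p) / (2 * (1 - μ) * (1 - p)) := by
  obtain ⟨hμ0, hμ1⟩ := hμ
  obtain ⟨hp0, hp1⟩ := hp
  have hm : 0 < 1 - μ := by linarith
  have hq : 0 < 1 - p := by linarith
  -- The induction starts at `n = 0`, where `0 ^ p = 0 ^ (1 - p) = 0` makes both sides vanish.
  have key : ∀ n : ℕ,
      (1 - μ) * ∑ t ∈ Finset.Icc 1 n, (LCL (θseq t) - LCL θstar)
          + (n : ℝ) ^ p * ‖θseq (n + 1) - θstar‖ ^ 2 / (2 * C)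
        ≤ D ^ 2 * (n : ℝ) ^ p / (2 * C) + μ * D * Gattack * n
          + C * (Gbenign + Gattack) ^ 2 * (n : ℝ) ^ (1 - p) / (2 * (1 - p)) := by
    intro n
    induction n with
    | zero => simp [Real.zero_rpow hp0.ne', Real.zero_rpow hq.ne']
    | succ n ih =>
      rw [Finset.sum_Icc_succ_top (by omega)]
      have ht : 1 ≤ n + 1 := by omega
      have hx : 0 < ((n : ℝ) + 1) ^ p := Real.rpow_pos_of_pos (by positivity) p
      have hα' : α (n + 1) = C / ((n : ℝ) + 1) ^ p := by rw [hα _ ht]; push_cast; rfl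
      have hstep := one_step_bound (gradient LCL (θseq (n + 1))) (gradient LHPE (θseq (n + 1)))
        (θseq (n + 1) - θstar) (α (n + 1)) μ Gbenign Gattack D
        (by rw [hα']; positivity) hμ0 hμ1 (hgradCL _) (hgradHPE _) (hdist _ ht)
      rw [sub_right_comm, ← hupdate _ ht, hα'] at hstep
      have hinv : ∀ z : ℝ, z / (2 * (C / ((n : ℝ) + 1) ^ p))
          = ((n : ℝ) + 1) ^ p * z / (2 * C) := by
        intro z; field_simp
      rw [hinv, hinv] at hstep
      have hc : LCL (θseq (n + 1)) - LCL θstar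
          ≤ ⟪gradient LCL (θseq (n + 1)), θseq (n + 1) - θstar⟫ := by
        have h := hconv (θseq (n + 1)) θstar
        rw [← neg_sub (θseq (n + 1)) θstar, inner_neg_right] at h
        linarith
      have hc' := mul_le_mul_of_nonneg_left hc hm.le
      have hmono : (n : ℝ) ^ p ≤ ((n : ℝ) + 1) ^ p :=
        Real.rpow_le_rpow n.cast_nonneg (by linarith) hp0.le
      have hd2 : ‖θseq (n + 1) - θstar‖ ^ 2 ≤ D ^ 2 :=
        pow_le_pow_left₀ (norm_nonneg _) (hdist _ ht) 2
      have htel : (((n : ℝ) + 1) ^ p - (n : ℝ) ^ p) * ‖θseq (n + 1) - θstar‖ ^ 2 / (2 * C)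
          ≤ (((n : ℝ) + 1) ^ p - (n : ℝ) ^ p) * D ^ 2 / (2 * C) := by
        have := sub_nonneg.2 hmono
        gcongr
      have hsum : C / ((n : ℝ) + 1) ^ p * (Gbenign + Gattack) ^ 2 / 2
          ≤ C * (Gbenign + Gattack) ^ 2 / (2 * (1 - p))
            * (((n : ℝ) + 1) ^ (1 - p) - (n : ℝ) ^ (1 - p)) := by
        calc C / ((n : ℝ) + 1) ^ p * (Gbenign + Gattack) ^ 2 / 2
            = C * (Gbenign + Gattack) ^ 2 / (2 * (1 - p)) * ((1 - p) / ((n : ℝ) + 1) ^ p) := by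
              field_simp
          _ ≤ _ := mul_le_mul_of_nonneg_left (one_sub_div_rpow_le p hp0 hp1 n) (by positivity)
      push_cast
      rw [mul_add]
      generalize ∑ t ∈ Finset.Icc 1 n, (LCL (θseq t) - LCL θstar) = S at ih ⊢
      ring_nf at ih hstep hc' htel hsum ⊢
      linarith
  have hT' := key T
  have hnn : 0 ≤ (T : ℝ) ^ p * ‖θseq (T + 1) - θstar‖ ^ 2 / (2 * C) := by positivity
  have hrhs : D ^ 2 * (T : ℝ) ^ p / (2 * C * (1 - μ))
        + μ * D * Gattack * T / (1 - μ)
        + C * (Gbenign + Gattack) ^ 2 * (T : ℝ) ^ (1 - p) / (2 * (1 - μ) * (1 - p))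
      = (D ^ 2 * (T : ℝ) ^ p / (2 * C) + μ * D * Gattack * T
        + C * (Gbenign + Gattack) ^ 2 * (T : ℝ) ^ (1 - p) / (2 * (1 - p))) / (1 - μ) := by
    field_simp
  rw [hrhs, le_div_iff₀ hm]
  linarith
end
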